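/- arXiv:1501.06452 — 3 statements merged into one kernel-verified Lean document; each statement's English description precedes it below -/
import Mathlib

section
/- Let X and Y be sequential topological spaces. Let (K_n)_{n∈ℕ} be countably compact subsets of X converging to a countably compact set K_∞ in the upper Vietoris sense, let (V_n)_{n∈ℕ} be open subsets of Y converging to an open set V_∞ with respect to the ω-Scott topology on O(Y), and let (f_n)_{n∈ℕ} be continuous functions from X to Y converging continuously to a continuous function f_∞. If f_∞[K_∞] ⊆ V_∞, then there exists n₀ ∈ ℕ such that f_n[K_n] ⊆ V_n for all n ≥ n₀. -/
/-!
Put `A n = {x | f∞ x ∈ V∞ ∧ ∀ m ≥ n, fₘ x ∈ Vₘ}`. These sets increase with `n`.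

If `yₙ → y ∈ V∞`, then `y` together with a tail of `(yₙ)` is a compact subset of `V∞`, so the opens
containing it form an ω-Scott neighbourhood of `V∞`; hence `yₙ ∈ Vₙ` eventually
(`eventually_mem_of_tendsto`). Applied to `yₙ = fₙ x`, this shows that the `A n` cover `f∞⁻¹(V∞)`.
Applied along subsequences, it shows that `fₘ (xₖ) ∈ Vₘ` for all large `m` and `k` whenever
`xₖ → x ∈ f∞⁻¹(V∞)` (`exists_forall_mem_of_tendsto`), so that each `A n` is sequentially open and
therefore open (`isOpen_goodSet`).

The opens `A n` thus form an increasing countable cover of the countably compact set `K∞`, so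
`K∞ ⊆ A n` for some `n`. Upper Vietoris convergence gives `Kₘ ⊆ A n` for all large `m`, which is
the claim.
-/

open TopologicalSpace Filter Set

/-- A subset `H` of a complete lattice is **ω-Scott open** if it is upward closed and every
nonempty countable directed family `D` whose supremum belongs to `H` meets `H`. -/
def OmegaScottOpen {L : Type*} [CompleteLattice L] (H : Set L) : Prop :=
  (∀ ⦃U V : L⦄, U ∈ H → U ≤ V → V ∈ H) ∧
  ∀ D : Set L, D.Nonempty → D.Countable → DirectedOn (· ≤ ·) D → sSup D ∈ H →
    (D ∩ H).Nonempty

/-- A subset `H` of a complete lattice is **Scott open** if it is upward closed and every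
nonempty directed family `D` whose supremum belongs to `H` meets `H`. -/
def ScottOpen {L : Type*} [CompleteLattice L] (H : Set L) : Prop :=
  (∀ ⦃U V : L⦄, U ∈ H → U ≤ V → V ∈ H) ∧
  ∀ D : Set L, D.Nonempty → DirectedOn (· ≤ ·) D → sSup D ∈ H → (D ∩ H).Nonempty

/-- The ω-Scott topology on a complete lattice: the collection of ω-Scott open sets (these form a
topology, so it coincides with the topology they generate). -/
def omegaScottTopology (L : Type*) [CompleteLattice L] : TopologicalSpace L :=
  .generateFrom {H | OmegaScottOpen H}

/-- The Scott topology on a complete lattice. -/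
def scottTopology' (L : Type*) [CompleteLattice L] : TopologicalSpace L :=
  .generateFrom {H | ScottOpen H}

/-- A set `K` is countably compact if every countable open cover of `K` has a finite subcover. -/
def CountablyCompactSet {X : Type*} [TopologicalSpace X] (K : Set X) : Prop :=
  ∀ C : Set (Set X), C.Countable → (∀ c ∈ C, IsOpen c) → K ⊆ ⋃₀ C →
    ∃ F ⊆ C, F.Finite ∧ K ⊆ ⋃₀ F

/-- The compact-open topology on the lattice of opens of `X`, generated by the sets
`K^⊆ = {U | K ⊆ U}` for `K` compact. -/
def coTopology (X : Type*) [TopologicalSpace X] : TopologicalSpace (Opens X) :=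
  .generateFrom {H | ∃ K : Set X, IsCompact K ∧ H = {U : Opens X | K ⊆ (U : Set X)}}

/-- The countably-compact-open topology on the lattice of opens of `X`. -/
def ccoTopology (X : Type*) [TopologicalSpace X] : TopologicalSpace (Opens X) :=
  .generateFrom
    {H | ∃ K : Set X, CountablyCompactSet K ∧ H = {U : Opens X | K ⊆ (U : Set X)}}

/-- A topological space is sequentially Hausdorff if limits of sequences are unique. -/
def SeqHausdorff (X : Type*) [TopologicalSpace X] : Prop :=
  ∀ (x : ℕ → X) (a b : X), Tendsto x atTop (nhds a) → Tendsto x atTop (nhds b) → a = b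

/-- `OO X` is the lattice of ω-Scott open subsets of `O(X)`, i.e. the opens of `O(X)`. -/
def OO (X : Type*) [TopologicalSpace X] : Type _ := {H : Set (Opens X) // OmegaScottOpen H}

namespace OO

variable {X : Type*} [TopologicalSpace X]

lemma omegaScottOpen_sUnion {S : Set (Set (Opens X))} (hS : ∀ s ∈ S, OmegaScottOpen s) :
    OmegaScottOpen (⋃₀ S) := by
  constructor
  · rintro U V ⟨s, hs, hU⟩ hUV
    exact ⟨s, hs, (hS s hs).1 hU hUV⟩
  · rintro D hne hcnt hdir hsup
    obtain ⟨s, hs, hU⟩ := hsup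
    obtain ⟨d, hdD, hds⟩ := (hS s hs).2 D hne hcnt hdir hU
    exact ⟨d, hdD, s, hs, hds⟩

instance : PartialOrder (OO X) := Subtype.partialOrder _

instance : SupSet (OO X) :=
  ⟨fun s => ⟨⋃₀ (Subtype.val '' s),
    omegaScottOpen_sUnion (by rintro _ ⟨a, _, rfl⟩; exact a.2)⟩⟩

/-- `OO X`, ordered by inclusion, is a complete lattice (suprema are unions). -/
noncomputable instance : CompleteLattice (OO X) :=
  completeLatticeOfSup _ fun s => by
    constructor
    · intro a ha U hU
      exact ⟨a.1, ⟨a, ha, rfl⟩, hU⟩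
    · intro b hb U hU
      obtain ⟨_, ⟨a, ha, rfl⟩, hUa⟩ := hU
      exact hb ha hUa

end OO

/-- `e K` is the collection of open sets containing `K`. -/
def eOpens {X : Type*} [TopologicalSpace X] (K : Set X) : Set (Opens X) :=
  {U : Opens X | K ⊆ (U : Set X)}

lemma exists_upper_of_directedOn {L : Type*} [Preorder L] {D : Set L}
    (hne : D.Nonempty) (hdir : DirectedOn (· ≤ ·) D) (s : Finset L) (hs : ↑s ⊆ D) :
    ∃ d ∈ D, ∀ U ∈ s, U ≤ d := by
  classical
  induction s using Finset.induction_on with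
  | empty => exact ⟨hne.choose, hne.choose_spec, by simp⟩
  | @insert a t ha ih =>
      obtain ⟨d, hd, hdt⟩ := ih (fun x hx => hs (by simp [hx]))
      obtain ⟨e, he, hae, hde⟩ := hdir a (hs (by simp)) d hd
      refine ⟨e, he, ?_⟩
      intro U hU
      rcases Finset.mem_insert.1 hU with rfl | hU
      · exact hae
      · exact (hdt U hU).trans hde

/-- For a countably compact set `K`, the collection `e K` is ω-Scott open. -/
lemma omegaScottOpen_eOpens {X : Type*} [TopologicalSpace X] {K : Set X}
    (hK : CountablyCompactSet K) : OmegaScottOpen (eOpens K) := by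
  classical
  constructor
  · intro U V hU hUV x hx
    exact hUV (hU hx)
  · rintro D hne hcnt hdir hsup
    have hcover : K ⊆ ⋃₀ ((fun U : Opens X => (U : Set X)) '' D) := by
      intro x hx
      have hx' : x ∈ sSup D := hsup hx
      obtain ⟨U, hU, hxU⟩ := Opens.mem_sSup.1 hx'
      exact ⟨(U : Set X), mem_image_of_mem _ hU, hxU⟩
    obtain ⟨F, hFsub, hFfin, hKF⟩ := hK _ (hcnt.image _)
      (by rintro _ ⟨U, _, rfl⟩; exact U.2) hcover
    obtain ⟨F₀, hF₀D, hF₀⟩ := Set.subset_image_iff.mp hFsub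
    have hF₀fin : F₀.Finite :=
      Set.Finite.of_finite_image (hF₀.symm ▸ hFfin) SetLike.coe_injective.injOn
    obtain ⟨d, hd, hdub⟩ := exists_upper_of_directedOn hne hdir hF₀fin.toFinset
      (by simpa using hF₀D)
    refine ⟨d, hd, ?_⟩
    intro x hx
    obtain ⟨c, hcF, hxc⟩ := hKF hx
    rw [← hF₀] at hcF
    obtain ⟨U, hU, rfl⟩ := hcF
    exact hdub U (hF₀fin.mem_toFinset.2 hU) hxc

lemma IsCompact.countablyCompactSet {X : Type*} [TopologicalSpace X] {K : Set X}
    (hK : IsCompact K) : CountablyCompactSet K := by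
  intro C _ hC hKC
  obtain ⟨F, hFC, hF, hKF⟩ := hK.elim_finite_subcover_image (b := C) (c := id) hC
    (by simpa [sUnion_eq_biUnion] using hKC)
  exact ⟨F, hFC, hF, by simpa [sUnion_eq_biUnion] using hKF⟩

/-- The membership relation is sequentially open: if `Vₙ → V∞` in the ω-Scott topology and
`yₙ → a ∈ V∞`, then `yₙ ∈ Vₙ` eventually. -/
lemma eventually_mem_of_tendsto {Y : Type*} [TopologicalSpace Y]
    {V : ℕ → Opens Y} {Vinf : Opens Y}
    (hV : Tendsto V atTop (@nhds (Opens Y) (omegaScottTopology (Opens Y)) Vinf))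
    {y : ℕ → Y} {a : Y} (hy : Tendsto y atTop (nhds a)) (ha : a ∈ Vinf) :
    ∀ᶠ n in atTop, y n ∈ V n := by
  obtain ⟨N, hN⟩ := eventually_atTop.1 (hy.eventually (Vinf.isOpen.mem_nhds ha))
  have hc : IsCompact (insert a (range fun n => y (n + N))) :=
    ((tendsto_add_atTop_iff_nat N).2 hy).isCompact_insert_range
  have hmem : Vinf ∈ eOpens (insert a (range fun n => y (n + N))) := by
    rintro _ (rfl | ⟨n, rfl⟩)
    · exact ha
    · exact hN _ (Nat.le_add_left _ _)
  let _ : TopologicalSpace (Opens Y) := omegaScottTopology (Opens Y)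
  have hopen : IsOpen (eOpens (insert a (range fun n => y (n + N)))) :=
    GenerateOpen.basic _ (omegaScottOpen_eOpens hc.countablyCompactSet)
  have hnhds := hV (IsOpen.mem_nhds hopen hmem)
  filter_upwards [hnhds, eventually_ge_atTop N] with n hn hNn
  exact hn (Or.inr ⟨n - N, by simp [Nat.sub_add_cancel hNn]⟩)

/-- A sequence placed along a strictly increasing sequence of indices, with its limit filled in at
all other indices, still converges. -/
lemma tendsto_extend_of_strictMono {X : Type*} [TopologicalSpace X] {φ : ℕ → ℕ}
    (hφ : StrictMono φ) {x : ℕ → X} {a : X} (hx : Tendsto x atTop (nhds a)) :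
    Tendsto (Function.extend φ x fun _ => a) atTop (nhds a) := by
  intro U hU
  obtain ⟨k₀, hk₀⟩ := eventually_atTop.1 (hx.eventually hU)
  refine eventually_atTop.2 ⟨φ k₀, fun m hm => ?_⟩
  by_cases h : ∃ k, φ k = m
  · obtain ⟨k, rfl⟩ := h
    change Function.extend φ x (fun _ => a) (φ k) ∈ U
    rw [hφ.injective.extend_apply]
    exact hk₀ k (hφ.le_iff_le.1 hm)
  · change Function.extend φ x (fun _ => a) m ∈ U
    rw [Function.extend_apply' _ _ _ h]
    exact mem_of_mem_nhds hU

/-- Under continuous convergence `fₙ → f∞` and ω-Scott convergence `Vₙ → V∞`, if `xₖ → a` with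
`f∞ a ∈ V∞`, then `fₘ (xₖ) ∈ Vₘ` once both indices are large, independently of each other. -/
lemma exists_forall_mem_of_tendsto {X Y : Type*} [TopologicalSpace X] [TopologicalSpace Y]
    {V : ℕ → Opens Y} {Vinf : Opens Y}
    (hV : Tendsto V atTop (@nhds (Opens Y) (omegaScottTopology (Opens Y)) Vinf))
    {f : ℕ → C(X, Y)} {finf : C(X, Y)}
    (hf : ∀ (x : ℕ → X) (xinf : X), Tendsto x atTop (nhds xinf) →
      Tendsto (fun n => f n (x n)) atTop (nhds (finf xinf)))
    {x : ℕ → X} {a : X} (hx : Tendsto x atTop (nhds a)) (ha : finf a ∈ Vinf) :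
    ∃ N : ℕ, ∀ m ≥ N, ∀ k ≥ N, f m (x k) ∈ V m := by
  by_contra! hcon
  choose m hm k hk hmk using hcon
  obtain ⟨φ, hφ, hmφ⟩ := strictMono_subseq_of_tendsto_atTop
    (tendsto_atTop_mono hm tendsto_id)
  have hxk : Tendsto (x ∘ k ∘ φ) atTop (nhds a) :=
    hx.comp ((tendsto_atTop_mono hk tendsto_id).comp hφ.tendsto_atTop)
  -- Continuous convergence concerns full sequences, so the counterexamples `x (k (φ j))` are
  -- placed at the indices `m (φ j)` and completed by the constant `a`.
  have hev := eventually_mem_of_tendsto hV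
    (hf _ _ (tendsto_extend_of_strictMono hmφ hxk)) ha
  obtain ⟨j, hj⟩ := (hmφ.tendsto_atTop.eventually hev).exists
  rw [hmφ.injective.extend_apply] at hj
  exact hmk (φ j) hj

/-- The points of `f∞⁻¹(V∞)` that every `fₘ` with `m ≥ n` maps into `Vₘ`. -/
def goodSet {X Y : Type*} [TopologicalSpace X] [TopologicalSpace Y]
    (V : ℕ → Opens Y) (Vinf : Opens Y) (f : ℕ → C(X, Y)) (finf : C(X, Y)) (n : ℕ) : Set X :=
  {x | finf x ∈ Vinf ∧ ∀ m ≥ n, f m x ∈ V m}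

lemma isOpen_goodSet {X Y : Type*} [TopologicalSpace X] [TopologicalSpace Y]
    [SequentialSpace X] {V : ℕ → Opens Y} {Vinf : Opens Y}
    (hV : Tendsto V atTop (@nhds (Opens Y) (omegaScottTopology (Opens Y)) Vinf))
    {f : ℕ → C(X, Y)} {finf : C(X, Y)}
    (hf : ∀ (x : ℕ → X) (xinf : X), Tendsto x atTop (nhds xinf) →
      Tendsto (fun n => f n (x n)) atTop (nhds (finf xinf))) (n : ℕ) :
    IsOpen (goodSet V Vinf f finf n) := by
  rw [← isClosed_compl_iff]
  apply IsSeqClosed.isClosed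
  intro x a hxA hx ha
  obtain ⟨N, hN⟩ := exists_forall_mem_of_tendsto hV hf hx ha.1
  -- The indices `m < N` are finitely many, so continuity of each `fₘ` handles them.
  have hsmall : ∀ᶠ k in atTop, ∀ m ∈ Finset.Ico n N, f m (x k) ∈ V m := by
    rw [Filter.eventually_all_finset]
    intro m hm
    exact (((f m).continuous.tendsto a).comp hx).eventually
      ((V m).isOpen.mem_nhds (ha.2 m (Finset.mem_Ico.1 hm).1))
  have hlim : ∀ᶠ k in atTop, finf (x k) ∈ Vinf :=
    ((finf.continuous.tendsto a).comp hx).eventually (Vinf.isOpen.mem_nhds ha.1)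
  obtain ⟨k, hk₁, hk₂, hkN⟩ := (hsmall.and (hlim.and (eventually_ge_atTop N))).exists
  refine hxA k ⟨hk₂, fun m hm => ?_⟩
  rcases lt_or_ge m N with h | h
  · exact hk₁ m (Finset.mem_Ico.2 ⟨hm, h⟩)
  · exact hN m h k hkN

/-- For sequential spaces `X, Y`: if countably compact sets `Kₙ → K∞` in the
upper Vietoris sense, opens `Vₙ → V∞` in the ω-Scott topology on `O(Y)`, and continuous maps
`fₙ → f∞` continuously, and `f∞[K∞] ⊆ V∞`, then eventually `fₙ[Kₙ] ⊆ Vₙ`. -/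
theorem statement4 {X Y : Type*} [TopologicalSpace X] [TopologicalSpace Y]
    [SequentialSpace X] [SequentialSpace Y]
    (K : ℕ → Set X) (Kinf : Set X)
    (hK : ∀ n, CountablyCompactSet (K n)) (hKinf : CountablyCompactSet Kinf)
    (hKconv : ∀ U : Set X, IsOpen U → Kinf ⊆ U → ∃ n₀ : ℕ, ∀ n ≥ n₀, K n ⊆ U)
    (V : ℕ → Opens Y) (Vinf : Opens Y)
    (hV : Tendsto V atTop (@nhds (Opens Y) (omegaScottTopology (Opens Y)) Vinf))
    (f : ℕ → C(X, Y)) (finf : C(X, Y))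
    (hf : ∀ (x : ℕ → X) (xinf : X), Tendsto x atTop (nhds xinf) →
      Tendsto (fun n => f n (x n)) atTop (nhds (finf xinf)))
    (hfK : finf '' Kinf ⊆ (Vinf : Set Y)) :
    ∃ n₀ : ℕ, ∀ n ≥ n₀, f n '' K n ⊆ (V n : Set Y) := by
  have hopen := fun n => isOpen_goodSet hV hf n
  let A : ℕ → Opens X := fun n => ⟨goodSet V Vinf f finf n, hopen n⟩
  have hmono : Monotone A := fun i j hij x hx => ⟨hx.1, fun m hm => hx.2 m (hij.trans hm)⟩
  have hcover : sSup (range A) ∈ eOpens Kinf := by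
    intro x hx
    have hx' : finf x ∈ Vinf := hfK (mem_image_of_mem _ hx)
    obtain ⟨n, hn⟩ := eventually_atTop.1
      (eventually_mem_of_tendsto hV (hf (fun _ => x) x tendsto_const_nhds) hx')
    exact Opens.mem_sSup.2 ⟨A n, mem_range_self n, hx', hn⟩
  obtain ⟨_, ⟨n, rfl⟩, hn⟩ := (omegaScottOpen_eOpens hKinf).2 (range A) (range_nonempty A)
    (countable_range A) (directedOn_range.2 hmono.directed_le) hcover
  obtain ⟨n₁, hn₁⟩ := hKconv _ (hopen n) hn
  refine ⟨max n n₁, fun m hm => ?_⟩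
  rintro _ ⟨x, hx, rfl⟩
  exact (hn₁ m ((le_max_right _ _).trans hm) hx).2 m ((le_max_left _ _).trans hm)
end

section
/- Let X be a sequential topological space that is sequentially Hausdorff. Then for every ω-Scott open set H ⊆ O(X) the intersection ⋂H is closed in X, and the map H ↦ X \ ⋂H is a continuous function from O(O(X)) (the family of ω-Scott open subsets of O(X), equipped with its own ω-Scott topology) to O(X) equipped with the ω-Scott topology. -/
/-!
Closedness is checked on sequences. If `x n → a` with every `x n` in `⋂ H`, and some `U ∈ H` misses
`a`, then the sets `U \ ({x n | n ≥ k} ∪ {a})` are open, because tails of a convergent sequence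
together with the limit are closed (`SeqHausdorff.isClosed_tail`). They increase with `k`, and their
union is `U`: a point occurring infinitely often in the sequence is itself a limit, hence equals `a`.
As `H` is ω-Scott open, one of these sets belongs to `H`, yet it omits `x k ∈ ⋂ H`.

Once all `⋂ H` are closed, `H ↦ X \ ⋂ H` sends unions to unions, so it preserves suprema, and any
such map is continuous for the ω-Scott topologies.
-/

open TopologicalSpace Filter Set

/-- A value taken infinitely often by a convergent sequence is its limit. -/
lemma SeqHausdorff.eq_of_frequently {X : Type*} [TopologicalSpace X] (hX : SeqHausdorff X)
    {y : ℕ → X} {b z : X} (hy : Tendsto y atTop (nhds b)) (hz : ∃ᶠ m in atTop, y m = z) :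
    z = b := by
  obtain ⟨φ, hφ, h⟩ := extraction_of_frequently_atTop hz
  have h1 : Tendsto (y ∘ φ) atTop (nhds b) := hy.comp hφ.tendsto_atTop
  have h2 : y ∘ φ = fun _ => z := funext h
  rw [h2] at h1
  exact hX _ _ _ tendsto_const_nhds h1

lemma SeqHausdorff.isClosed_tail {X : Type*} [TopologicalSpace X] [SequentialSpace X]
    (hX : SeqHausdorff X) {x : ℕ → X} {a : X} (hx : Tendsto x atTop (nhds a)) (k : ℕ) :
    IsClosed (insert a (x '' Ici k)) := by
  apply IsSeqClosed.isClosed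
  intro y b hyK hy
  by_cases hfreq : ∃ z ∈ insert a (x '' Ici k), ∃ᶠ m in atTop, y m = z
  · obtain ⟨z, hzK, hz⟩ := hfreq
    exact hX.eq_of_frequently hy hz ▸ hzK
  · -- No value recurs, so the indices `f m` with `y m = x (f m)` tend to infinity and `y → a`.
    push Not at hfreq
    have hex : ∀ m, ∃ j, y m ≠ a → k ≤ j ∧ x j = y m := by
      intro m
      rcases hyK m with h | ⟨j, hj, h⟩
      · exact ⟨0, fun h' => (h' h).elim⟩
      · exact ⟨j, fun _ => ⟨hj, h⟩⟩
    choose f hf using hex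
    have hne : ∀ᶠ m in atTop, y m ≠ a := hfreq a (mem_insert _ _)
    have hfj : ∀ j, ∀ᶠ m in atTop, f m ≠ j := by
      intro j
      by_cases hj : k ≤ j
      · filter_upwards [hne, hfreq (x j) (Or.inr ⟨j, hj, rfl⟩)] with m h1 h2 h3
        exact h2 (h3 ▸ (hf m h1).2.symm)
      · filter_upwards [hne] with m h1 h3
        exact hj (h3 ▸ (hf m h1).1)
    have hft : Tendsto f atTop atTop := by
      rw [tendsto_atTop]
      intro N
      have := (eventually_all_finset (Finset.range N)).2 (fun j _ => hfj j)
      filter_upwards [this] with m hm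
      by_contra hlt
      exact hm (f m) (Finset.mem_range.2 (not_le.1 hlt)) rfl
    have hya : Tendsto y atTop (nhds a) :=
      (hx.comp hft).congr' (by filter_upwards [hne] with m h1 using (hf m h1).2)
    exact Or.inl (hX _ _ _ hy hya)

lemma SeqHausdorff.isClosed_iInter {X : Type*} [TopologicalSpace X] [SequentialSpace X]
    (hX : SeqHausdorff X) {H : Set (Opens X)} (hH : OmegaScottOpen H) :
    IsClosed (⋂ U ∈ H, (U : Set X)) := by
  apply IsSeqClosed.isClosed
  intro x a hxH hx
  by_contra ha
  simp only [mem_iInter, not_forall] at ha hxH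
  obtain ⟨U, hU, haU⟩ := ha
  let V : ℕ → Opens X := fun k =>
    ⟨(U : Set X) \ insert a (x '' Ici k), U.2.sdiff (hX.isClosed_tail hx k)⟩
  have hV : Monotone V := fun i j hij =>
    sdiff_subset_sdiff_right (insert_subset_insert (image_mono (Ici_subset_Ici.2 hij)))
  have hsup : U ≤ sSup (range V) := by
    intro z hz
    have hza : z ≠ a := fun h => haU (h ▸ hz)
    have hev : ∀ᶠ m in atTop, x m ≠ z := by
      by_contra h
      exact hza (hX.eq_of_frequently hx (by simpa [Filter.Frequently] using h))
    obtain ⟨k, hk⟩ := eventually_atTop.1 hev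
    refine Opens.mem_sSup.2 ⟨V k, mem_range_self k, hz, ?_⟩
    rintro (h | ⟨j, hj, h⟩)
    · exact hza h
    · exact hk j hj h
  obtain ⟨_, ⟨k, rfl⟩, hk⟩ := hH.2 (range V) (range_nonempty V) (countable_range V)
    (directedOn_range.2 hV.directed_le) (hH.1 hU hsup)
  exact (hxH k (V k) hk).2 (Or.inr ⟨k, self_mem_Ici, rfl⟩)

lemma continuous_omegaScott_of_map_sSup {L M : Type*} [CompleteLattice L] [CompleteLattice M]
    {f : L → M} (hmono : Monotone f) (hf : ∀ D : Set L, f (sSup D) = sSup (f '' D)) :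
    @Continuous L M (omegaScottTopology L) (omegaScottTopology M) f := by
  let _ := omegaScottTopology L
  refine continuous_generateFrom_iff.2 fun H hH => isOpen_generateFrom_of_mem ⟨?_, ?_⟩
  · exact fun U V hU hUV => hH.1 hU (hmono hUV)
  · intro D hne hcnt hdir hsup
    have hdir' : DirectedOn (· ≤ ·) (f '' D) := by
      rintro _ ⟨u, hu, rfl⟩ _ ⟨v, hv, rfl⟩
      obtain ⟨w, hw, huw, hvw⟩ := hdir u hu v hv
      exact ⟨f w, mem_image_of_mem f hw, hmono huw, hmono hvw⟩
    obtain ⟨_, ⟨d, hd, rfl⟩, hdH⟩ :=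
      hH.2 (f '' D) (hne.image f) (hcnt.image f) hdir' (hf D ▸ hsup)
    exact ⟨d, hd, hdH⟩

/-- In a sequentially Hausdorff sequential space `X`, the intersection `⋂ H` of
any ω-Scott open collection `H` of opens is closed (so its complement equals its interior), and
the map `H ↦ X \ ⋂ H` is continuous from `O(O(X))` (with its ω-Scott topology) to `O(X)` (with
the ω-Scott topology). -/
theorem statement7 {X : Type*} [TopologicalSpace X] [SequentialSpace X]
    (hX : SeqHausdorff X) :
    (∀ H : Set (Opens X), OmegaScottOpen H → IsClosed (⋂ U ∈ H, (U : Set X))) ∧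
    (∀ H : OO X, interior ((⋂ U ∈ H.1, (U : Set X))ᶜ) = (⋂ U ∈ H.1, (U : Set X))ᶜ) ∧
    @Continuous (OO X) (Opens X) (omegaScottTopology (OO X)) (omegaScottTopology (Opens X))
      (fun H => ⟨interior ((⋂ U ∈ H.1, (U : Set X))ᶜ), isOpen_interior⟩) := by
  have hint : ∀ H : OO X,
      interior ((⋂ U ∈ H.1, (U : Set X))ᶜ) = (⋂ U ∈ H.1, (U : Set X))ᶜ :=
    fun H => (hX.isClosed_iInter H.2).isOpen_compl.interior_eq
  refine ⟨fun H hH => hX.isClosed_iInter hH, hint, continuous_omegaScott_of_map_sSup ?_ ?_⟩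
  · intro H K hHK
    exact interior_mono (compl_subset_compl.2 (biInter_mono hHK fun _ _ => subset_rfl))
  · intro D
    have hmem : ∀ (H : OO X) (z : X), z ∈ interior ((⋂ U ∈ H.1, (U : Set X))ᶜ) ↔
        ∃ U ∈ H.1, z ∉ U := by
      intro H z
      rw [hint]
      simp
    ext z
    refine (hmem _ z).trans (Iff.trans ?_ Opens.mem_sSup.symm)
    constructor
    · -- Suprema in `OO X` are unions by construction.
      rintro ⟨U, ⟨_, ⟨H, hH, rfl⟩, hU⟩, hz⟩
      exact ⟨_, ⟨H, hH, rfl⟩, (hmem H z).2 ⟨U, hU, hz⟩⟩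
    · rintro ⟨_, ⟨H, hH, rfl⟩, hz⟩
      obtain ⟨U, hU, hzU⟩ := (hmem H z).1 hz
      exact ⟨U, ⟨H.1, ⟨H, hH, rfl⟩, hU⟩, hzU⟩
end

section
/- Let X be a sequential T0 topological space and let (K_n)_{n∈ℕ} and K_∞ be countably compact subsets of X. Then (K_n) converges to K_∞ in the upper Vietoris sense if and only if the sequence (e(K_n)) converges to e(K_∞) with respect to the ω-Scott topology on O(O(X)). -/
/-!
If `e (K n) → e K∞`, then evaluating at the ω-Scott open sets `{H | U ∈ H}` of `O(O(X))` gives upper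
Vietoris convergence.

Conversely, if `K n` converges to `K∞` in the upper Vietoris sense, then every tail
`L n = K∞ ∪ ⋃ m ≥ n, K m` is again countably compact (`countablyCompactSet_tailUnion`): a finite
subfamily covering `K∞` already covers all but finitely many `K m`. Hence the `e (L n)` form an
increasing sequence in `O(O(X))`, and its union is `e K∞`, again by convergence. An ω-Scott open
set containing `e K∞` therefore contains some `e (L n)`, and so every `e (K m) ⊇ e (L n)`
with `m ≥ n`.
-/

open TopologicalSpace Filter Set

/-- The union of the limit set with the `n`-th tail of the sequence. -/
def tailUnion {X : Type*} (K : ℕ → Set X) (Kinf : Set X) (n : ℕ) : Set X :=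
  Kinf ∪ ⋃ m ≥ n, K m

lemma subset_tailUnion {X : Type*} (K : ℕ → Set X) (Kinf : Set X) {n m : ℕ} (h : n ≤ m) :
    K m ⊆ tailUnion K Kinf n :=
  fun _ hx => Or.inr (mem_iUnion₂.2 ⟨m, h, hx⟩)

lemma tailUnion_subset {X : Type*} {K : ℕ → Set X} {Kinf : Set X} {n : ℕ} {U : Set X}
    (hinf : Kinf ⊆ U) (h : ∀ m ≥ n, K m ⊆ U) : tailUnion K Kinf n ⊆ U :=
  union_subset hinf (iUnion₂_subset h)

lemma countablyCompactSet_tailUnion {X : Type*} [TopologicalSpace X]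
    {K : ℕ → Set X} {Kinf : Set X}
    (hK : ∀ n, CountablyCompactSet (K n)) (hKinf : CountablyCompactSet Kinf)
    (hconv : ∀ U : Set X, IsOpen U → Kinf ⊆ U → ∃ n₀ : ℕ, ∀ n ≥ n₀, K n ⊆ U) (n : ℕ) :
    CountablyCompactSet (tailUnion K Kinf n) := by
  intro C hC hopen hcov
  obtain ⟨F, hFC, hFfin, hF⟩ := hKinf C hC hopen (subset_union_left.trans hcov)
  obtain ⟨n₀, hn₀⟩ := hconv (⋃₀ F) (isOpen_sUnion fun c hc => hopen c (hFC hc)) hF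
  have hG : ∀ m, ∃ G ⊆ C, G.Finite ∧ (n ≤ m → K m ⊆ ⋃₀ G) := by
    intro m
    by_cases hm : n ≤ m
    · obtain ⟨G, h₁, h₂, h₃⟩ := hK m C hC hopen ((subset_tailUnion K Kinf hm).trans hcov)
      exact ⟨G, h₁, h₂, fun _ => h₃⟩
    · exact ⟨∅, empty_subset _, finite_empty, fun h => absurd h hm⟩
  choose G hGC hGfin hG using hG
  refine ⟨F ∪ ⋃ m ∈ Set.Iio n₀, G m, union_subset hFC (iUnion₂_subset fun m _ => hGC m),
    hFfin.union ((finite_Iio n₀).biUnion fun m _ => hGfin m),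
    tailUnion_subset (hF.trans (sUnion_subset_sUnion subset_union_left)) fun m hm => ?_⟩
  rcases lt_or_ge m n₀ with h | h
  · exact (hG m hm).trans
      (sUnion_subset_sUnion ((subset_biUnion_of_mem (u := G) (mem_Iio.2 h)).trans subset_union_right))
  · exact (hn₀ m h).trans (sUnion_subset_sUnion subset_union_left)

lemma tendsto_omegaScott_iff {L : Type*} [CompleteLattice L] {u : ℕ → L} {a : L} :
    Tendsto u atTop (@nhds L (omegaScottTopology L) a) ↔
      ∀ S : Set L, OmegaScottOpen S → a ∈ S → ∀ᶠ n in atTop, u n ∈ S :=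
  tendsto_nhds_generateFrom_iff

lemma omegaScottOpen_setOf_mem {X : Type*} [TopologicalSpace X] (U : Opens X) :
    OmegaScottOpen {H : OO X | U ∈ H.1} := by
  refine ⟨fun H H' hU hle => hle hU, fun D _ _ _ hsup => ?_⟩
  obtain ⟨_, ⟨H, hH, rfl⟩, hU⟩ := hsup
  exact ⟨H, hH, hU⟩

/-- In a sequential T₀ space `X`, countably compact sets `Kₙ` converge to a
countably compact set `K∞` in the upper Vietoris sense iff `e(Kₙ) → e(K∞)` w.r.t. the ω-Scott
topology on `O(O(X))`. -/
theorem statement11 {X : Type*} [TopologicalSpace X] [SequentialSpace X] [T0Space X]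
    (K : ℕ → Set X) (Kinf : Set X)
    (hK : ∀ n, CountablyCompactSet (K n)) (hKinf : CountablyCompactSet Kinf) :
    (∀ U : Set X, IsOpen U → Kinf ⊆ U → ∃ n₀ : ℕ, ∀ n ≥ n₀, K n ⊆ U) ↔
      Tendsto (fun n : ℕ => (⟨eOpens (K n), omegaScottOpen_eOpens (hK n)⟩ : OO X)) atTop
        (@nhds (OO X) (omegaScottTopology (OO X))
          ⟨eOpens Kinf, omegaScottOpen_eOpens hKinf⟩) := by
  constructor
  · intro hconv
    refine (tendsto_omegaScott_iff (L := OO X)).2 fun S hS hmem => ?_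
    let E : ℕ → OO X := fun n => ⟨eOpens (tailUnion K Kinf n),
      omegaScottOpen_eOpens (countablyCompactSet_tailUnion hK hKinf hconv n)⟩
    have hmono : Monotone E := fun a b hab U hU =>
      tailUnion_subset (subset_union_left.trans hU) fun m hm =>
        (subset_tailUnion K Kinf (hab.trans hm)).trans hU
    have hle : (⟨eOpens Kinf, omegaScottOpen_eOpens hKinf⟩ : OO X) ≤ sSup (range E) := by
      intro U hU
      obtain ⟨n, hn⟩ := hconv U U.isOpen hU
      exact (le_sSup (mem_range_self n) : E n ≤ sSup (range E))
        (tailUnion_subset hU hn : U ∈ (E n).1)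
    obtain ⟨_, ⟨n, rfl⟩, hn⟩ := hS.2 (range E) (range_nonempty E) (countable_range E)
      (directedOn_range.2 hmono.directed_le) (hS.1 hmem hle)
    filter_upwards [eventually_ge_atTop n] with m hm
    exact hS.1 hn fun U hU => (subset_tailUnion K Kinf hm).trans hU
  · intro hconv U hU hsub
    exact eventually_atTop.1
      ((tendsto_omegaScott_iff (L := OO X)).1 hconv _ (omegaScottOpen_setOf_mem ⟨U, hU⟩) hsub)
end
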